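/- Let Λ ∈ P be J-dominant (⟨h_j,Λ⟩ ≥ 0 for all j ∈ J). The canonical map U_q^-(𝔤)/Σ_{j∈J} U_q^-(𝔤)f_j^{⟨h_j,Λ⟩+1} → V_J(Λ) is an isomorphism, where V_J(Λ) = U_q(𝔭_J)/(Σ_{j∈J}(U_q(𝔭_J)e_j + U_q(𝔭_J)f_j^{⟨h_j,Λ⟩+1}) + Σ_{h∈P^∨} U_q(𝔭_J)(q^h - q^{⟨h,Λ⟩})). -/

import Mathlib

noncomputable section

open scoped TensorProduct

/-- The field `ℚ(q)` of rational functions. -/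
abbrev KK : Type := RatFunc ℚ

/-- The indeterminate `q ∈ ℚ(q)`. -/
def qq : KK := RatFunc.X

/-- `q^m` for `m ∈ ℤ`. -/
def qpow (m : ℤ) : KK := qq ^ m

/-- The quantum integer `[n]_i = (q_i^n - q_i^{-n})/(q_i - q_i^{-1})` where `q_i = q^d`. -/
def qint (d n : ℤ) : KK := (qpow (d * n) - qpow (-(d * n))) / (qpow d - qpow (-d))

/-- The quantum factorial `[n]_i!`. -/
def qfact (d : ℤ) : ℕ → KK
  | 0 => 1
  | n + 1 => qfact d n * qint d (n + 1)

/-- A symmetrizable generalized Cartan matrix `a` with symmetrizers `d i`, so that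
`(α_i, α_j) = d i * a i j`. -/
structure CartanData (I : Type) : Type where
  a : I → I → ℤ
  d : I → ℤ
  d_pos : ∀ i, 0 < d i
  a_diag : ∀ i, a i i = 2
  a_offdiag : ∀ i j, i ≠ j → a i j ≤ 0
  symm : ∀ i j, d i * a i j = d j * a j i

/-- Generators of the quantum group `U_q(𝔤)` (adjoint form: `t i = q^{(α_i,α_i)/2 · h_i}`). -/
inductive QGen (I : Type) : Type
  | e : I → QGen I
  | f : I → QGen I
  | t : I → QGen I
  | tinv : I → QGen I

variable {I : Type}

/-- The free algebra on the generators of `U_q(𝔤)`. -/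
abbrev FA (I : Type) : Type := FreeAlgebra KK (QGen I)

def ge (i : I) : FA I := FreeAlgebra.ι KK (QGen.e i)
def gf (i : I) : FA I := FreeAlgebra.ι KK (QGen.f i)
def gT (i : I) : FA I := FreeAlgebra.ι KK (QGen.t i)
def gTinv (i : I) : FA I := FreeAlgebra.ι KK (QGen.tinv i)

/-- Divided power `e_i^{(s)}` in the free algebra. -/
def edp (C : CartanData I) (i : I) (s : ℕ) : FA I := (qfact (C.d i) s)⁻¹ • ge i ^ s

/-- Divided power `f_i^{(s)}` in the free algebra. -/
def fdp (C : CartanData I) (i : I) (s : ℕ) : FA I := (qfact (C.d i) s)⁻¹ • gf i ^ s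

/-- The quantum Serre element `Σ_{s} (-1)^s e_i^{(s)} e_j e_i^{(1-a_{ij}-s)}`. -/
def serreE (C : CartanData I) (i j : I) : FA I :=
  ∑ s ∈ Finset.range ((1 - C.a i j).toNat + 1),
    ((-1 : KK) ^ s) • (edp C i s * ge j * edp C i ((1 - C.a i j).toNat - s))

/-- The quantum Serre element `Σ_{s} (-1)^s f_i^{(s)} f_j f_i^{(1-a_{ij}-s)}`. -/
def serreF (C : CartanData I) (i j : I) : FA I :=
  ∑ s ∈ Finset.range ((1 - C.a i j).toNat + 1),
    ((-1 : KK) ^ s) • (fdp C i s * gf j * fdp C i ((1 - C.a i j).toNat - s))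

/-- The defining relations of the quantum group `U_q(𝔤)`. -/
inductive QRel [DecidableEq I] (C : CartanData I) : FA I → FA I → Prop
  | t_tinv (i : I) : QRel C (gT i * gTinv i) 1
  | tinv_t (i : I) : QRel C (gTinv i * gT i) 1
  | t_t (i j : I) : QRel C (gT i * gT j) (gT j * gT i)
  | t_tinv_comm (i j : I) : QRel C (gT i * gTinv j) (gTinv j * gT i)
  | t_e (i j : I) : QRel C (gT i * ge j) (qpow (C.d i * C.a i j) • (ge j * gT i))
  | t_f (i j : I) : QRel C (gT i * gf j) (qpow (-(C.d i * C.a i j)) • (gf j * gT i))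
  | e_f (i j : I) :
      QRel C (ge i * gf j - gf j * ge i)
        (if i = j then (qpow (C.d i) - qpow (-C.d i))⁻¹ • (gT i - gTinv i) else 0)
  | serre_e (i j : I) : i ≠ j → QRel C (serreE C i j) 0
  | serre_f (i j : I) : i ≠ j → QRel C (serreF C i j) 0

/-- The quantum group `U_q(𝔤)`, presented by generators and relations. -/
abbrev Uq [DecidableEq I] (C : CartanData I) : Type := RingQuot (QRel C)

variable [DecidableEq I]

/-- The canonical map from the free algebra onto `U_q(𝔤)`. -/
def uMk (C : CartanData I) : FA I →ₐ[KK] Uq C := RingQuot.mkAlgHom KK (QRel C)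

def uE (C : CartanData I) (i : I) : Uq C := uMk C (ge i)
def uF (C : CartanData I) (i : I) : Uq C := uMk C (gf i)
def uT (C : CartanData I) (i : I) : Uq C := uMk C (gT i)
def uTinv (C : CartanData I) (i : I) : Uq C := uMk C (gTinv i)

/-- Divided power `e_i^{(s)} ∈ U_q(𝔤)`. -/
def uEdp (C : CartanData I) (i : I) (s : ℕ) : Uq C := (qfact (C.d i) s)⁻¹ • uE C i ^ s

/-- Divided power `f_i^{(s)} ∈ U_q(𝔤)`. -/
def uFdp (C : CartanData I) (i : I) (s : ℕ) : Uq C := (qfact (C.d i) s)⁻¹ • uF C i ^ s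

/-- The negative half `U_q^-(𝔤)`, the subalgebra generated by the `f_i`. -/
def Uneg (C : CartanData I) : Subalgebra KK (Uq C) :=
  Algebra.adjoin KK (Set.range (uF C))

/-- The weight `-β` component of `U_q^-(𝔤)` (spanned by monomials in the `f_i` of
content `β ∈ Q_+`). -/
def negWt (C : CartanData I) (β : I →₀ ℕ) : Submodule KK (Uq C) :=
  Submodule.span KK
    {u | ∃ w : List I, (∀ j, w.count j = β j) ∧ u = (w.map (uF C)).prod}

/-- The pairing `(α_i, β) = Σ_j β_j (α_i, α_j)` for `β ∈ Q_+`. -/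
def pairB (C : CartanData I) (i : I) (β : I →₀ ℕ) : ℤ :=
  β.sum fun j m => C.d i * C.a i j * (m : ℤ)

/-- `f_j` as an element of the subalgebra `U_q^-(𝔤)`. -/
def uFneg (C : CartanData I) (j : I) : ↥(Uneg C) :=
  ⟨uF C j, Algebra.subset_adjoin ⟨j, rfl⟩⟩

/-- `t_i^m` for `m ∈ ℤ`. -/
def tpow (C : CartanData I) (i : I) (m : ℤ) : Uq C :=
  if 0 ≤ m then uT C i ^ m.toNat else uTinv C i ^ (-m).toNat

/-- Generators of the parabolic quantum group `U_q(𝔭_J)`: `e_j` only for `j ∈ J`. -/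
inductive QGenP (I : Type) (J : Set I) : Type
  | e : ↥J → QGenP I J
  | f : I → QGenP I J
  | t : I → QGenP I J
  | tinv : I → QGenP I J

/-- The free algebra on the generators of `U_q(𝔭_J)`. -/
abbrev FAP (I : Type) (J : Set I) : Type := FreeAlgebra KK (QGenP I J)

def pge (J : Set I) (j : ↥J) : FAP I J := FreeAlgebra.ι KK (QGenP.e j)
def pgf (J : Set I) (i : I) : FAP I J := FreeAlgebra.ι KK (QGenP.f i)
def pgT (J : Set I) (i : I) : FAP I J := FreeAlgebra.ι KK (QGenP.t i)
def pgTinv (J : Set I) (i : I) : FAP I J := FreeAlgebra.ι KK (QGenP.tinv i)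

def pedp (C : CartanData I) (J : Set I) (j : ↥J) (s : ℕ) : FAP I J :=
  (qfact (C.d j) s)⁻¹ • pge J j ^ s

def pfdp (C : CartanData I) (J : Set I) (i : I) (s : ℕ) : FAP I J :=
  (qfact (C.d i) s)⁻¹ • pgf J i ^ s

def pserreE (C : CartanData I) (J : Set I) (i j : ↥J) : FAP I J :=
  ∑ s ∈ Finset.range ((1 - C.a i j).toNat + 1),
    ((-1 : KK) ^ s) • (pedp C J i s * pge J j * pedp C J i ((1 - C.a i j).toNat - s))

def pserreF (C : CartanData I) (J : Set I) (i j : I) : FAP I J :=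
  ∑ s ∈ Finset.range ((1 - C.a i j).toNat + 1),
    ((-1 : KK) ^ s) • (pfdp C J i s * pgf J j * pfdp C J i ((1 - C.a i j).toNat - s))

/-- The defining relations of the parabolic quantum group `U_q(𝔭_J)`. -/
inductive QRelP [DecidableEq I] (C : CartanData I) (J : Set I) : FAP I J → FAP I J → Prop
  | t_tinv (i : I) : QRelP C J (pgT J i * pgTinv J i) 1
  | tinv_t (i : I) : QRelP C J (pgTinv J i * pgT J i) 1
  | t_t (i j : I) : QRelP C J (pgT J i * pgT J j) (pgT J j * pgT J i)
  | t_tinv_comm (i j : I) : QRelP C J (pgT J i * pgTinv J j) (pgTinv J j * pgT J i)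
  | t_e (i : I) (j : ↥J) :
      QRelP C J (pgT J i * pge J j) (qpow (C.d i * C.a i j) • (pge J j * pgT J i))
  | t_f (i j : I) :
      QRelP C J (pgT J i * pgf J j) (qpow (-(C.d i * C.a i j)) • (pgf J j * pgT J i))
  | e_f (i : ↥J) (j : I) :
      QRelP C J (pge J i * pgf J j - pgf J j * pge J i)
        (if (i : I) = j then
            (qpow (C.d i) - qpow (-C.d (i : I)))⁻¹ • (pgT J i - pgTinv J i)
          else 0)
  | serre_e (i j : ↥J) : (i : I) ≠ (j : I) → QRelP C J (pserreE C J i j) 0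
  | serre_f (i j : I) : i ≠ j → QRelP C J (pserreF C J i j) 0

/-- The parabolic quantum group `U_q(𝔭_J)`, presented by generators and relations. -/
abbrev UqP [DecidableEq I] (C : CartanData I) (J : Set I) : Type := RingQuot (QRelP C J)

def pMk (C : CartanData I) (J : Set I) : FAP I J →ₐ[KK] UqP C J :=
  RingQuot.mkAlgHom KK (QRelP C J)

def pE (C : CartanData I) (J : Set I) (j : ↥J) : UqP C J := pMk C J (pge J j)
def pF (C : CartanData I) (J : Set I) (i : I) : UqP C J := pMk C J (pgf J i)
def pT (C : CartanData I) (J : Set I) (i : I) : UqP C J := pMk C J (pgT J i)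
def pTinv (C : CartanData I) (J : Set I) (i : I) : UqP C J := pMk C J (pgTinv J i)

/-- `U_q^-(𝔭_J)`, the subalgebra of `U_q(𝔭_J)` generated by the `f_i`, `i ∈ I`. -/
def Pneg (C : CartanData I) (J : Set I) : Subalgebra KK (UqP C J) :=
  Algebra.adjoin KK (Set.range (pF C J))

/-- `U_q^0(𝔭_J)`, the subalgebra of `U_q(𝔭_J)` generated by the `q^h`. -/
def Pzero (C : CartanData I) (J : Set I) : Subalgebra KK (UqP C J) :=
  Algebra.adjoin KK (Set.range (pT C J) ∪ Set.range (pTinv C J))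

/-- `U_q^+(𝔭_J)`, the subalgebra of `U_q(𝔭_J)` generated by the `e_j`, `j ∈ J`. -/
def Ppos (C : CartanData I) (J : Set I) : Subalgebra KK (UqP C J) :=
  Algebra.adjoin KK (Set.range (pE C J))

/-- The multiplication map `U_q^-(𝔭_J) ⊗ U_q^0(𝔭_J) ⊗ U_q^+(𝔭_J) → U_q(𝔭_J)`,
`x ⊗ y ⊗ z ↦ xyz`. -/
def triMul (C : CartanData I) (J : Set I) :
    (↥(Pneg C J) ⊗[KK] ↥(Pzero C J)) ⊗[KK] ↥(Ppos C J) →ₗ[KK] UqP C J :=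
  (LinearMap.mul' KK (UqP C J)).comp
    (TensorProduct.map
      ((LinearMap.mul' KK (UqP C J)).comp
        (TensorProduct.map (Pneg C J).val.toLinearMap (Pzero C J).val.toLinearMap))
      (Ppos C J).val.toLinearMap)

/-- The generators of the defining left ideal of the `U_q(𝔭_J)`-module `V_J(Λ)`,
for a `J`-dominant weight `Λ` with `⟨h_i, Λ⟩ = lam i`. -/
def VJgens (C : CartanData I) (J : Set I) (lam : I → ℤ) : Set (UqP C J) :=
  {x | ∃ j : ↥J, x = pE C J j} ∪
  {x | ∃ j : ↥J, x = pF C J (j : I) ^ (lam (j : I) + 1).toNat} ∪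
  {x | ∃ i : I, x = pT C J i - qpow (C.d i * lam i) • 1} ∪
  {x | ∃ i : I, x = pTinv C J i - qpow (-(C.d i * lam i)) • 1}

/-- The defining left ideal of `V_J(Λ)`. -/
def VJideal (C : CartanData I) (J : Set I) (lam : I → ℤ) : Submodule (UqP C J) (UqP C J) :=
  Submodule.span (UqP C J) (VJgens C J lam)

/-- The left `U_q(𝔭_J)`-module
`V_J(Λ) = U_q(𝔭_J)/(Σ_{j∈J}(U_q(𝔭_J) e_j + U_q(𝔭_J) f_j^{⟨h_j,Λ⟩+1})
  + Σ_h U_q(𝔭_J)(q^h - q^{⟨h,Λ⟩}))`. -/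
abbrev VJmod (C : CartanData I) (J : Set I) (lam : I → ℤ) : Type :=
  UqP C J ⧸ VJideal C J lam

end

/-!
Let `F` be the free algebra on the `f_i`. Prescribing `e_k 1 = 0`, `t_i 1 = q_i^{⟨h_i, Λ⟩}` and
the commutation relations with left multiplication by the `f_j` makes `e_k` and `t_i` act on `F`,
and all relations of `U_q(𝔭_J)` hold except the Serre relations in the `f`'s. Indeed an operator
that `q`-commutes with every `f_j` and kills `1` is zero, and the Serre elements in the `e`'s are
of this kind. Let `K` be the left ideal of `F` generated by the two-sided ideal of the Serre
relations and by the `f_j^{⟨h_j, Λ⟩ + 1}`, `j ∈ J`. Up to a scalar the Serre elements are iterated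
`q`-commutators, and the symmetry of sums of `q`-powers under `q ↦ q⁻¹` shows that they commute
with the `e_k`; the `sl₂`-computation shows that `e_k` kills the `f_j^{⟨h_j, Λ⟩ + 1}`. Hence `K`
is stable and `F / K` is a `U_q(𝔭_J)`-module in which the defining left ideal of `V_J(Λ)`
annihilates the class of `1`. As `u ∈ U_q^-` sends this class to the class of a preimage of `u`,
the kernel of `U_q^- → V_J(Λ)` is no larger than the image of `K`, which is
`∑_j U_q^- f_j^{⟨h_j, Λ⟩ + 1}`.

Surjectivity says that a highest weight vector generates its module already under `U_q^-`.
-/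

noncomputable section

/-! ### Quantum integers -/

theorem qq_ne_zero : qq ≠ 0 := RatFunc.X_ne_zero

theorem qpow_zero : qpow 0 = 1 := zpow_zero _

theorem qpow_add (m n : ℤ) : qpow (m + n) = qpow m * qpow n := zpow_add₀ qq_ne_zero m n

theorem qpow_mul_qpow_neg (m : ℤ) : qpow m * qpow (-m) = 1 := by
  rw [← qpow_add, add_neg_cancel, qpow_zero]

theorem qq_pow_ne_one {n : ℕ} (hn : n ≠ 0) : qq ^ n ≠ 1 := by
  rw [qq, ← RatFunc.algebraMap_X, ← map_pow, ← map_one (algebraMap (Polynomial ℚ) (RatFunc ℚ)),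
    (RatFunc.algebraMap_injective ℚ).ne_iff]
  exact fun h => hn (by simpa using congrArg Polynomial.natDegree h)

theorem qpow_ne_one {m : ℤ} (hm : m ≠ 0) : qpow m ≠ 1 := by
  obtain ⟨n, rfl | rfl⟩ := m.eq_nat_or_neg
  · simpa [qpow] using qq_pow_ne_one (n := n) (by simpa using hm)
  · simpa [qpow] using qq_pow_ne_one (n := n) (by simpa using hm)

theorem qpow_sub_qpow_neg_ne_zero {m : ℤ} (hm : m ≠ 0) : qpow m - qpow (-m) ≠ 0 := by
  rw [sub_ne_zero]
  intro h
  refine qpow_ne_one (m := m + m) (by omega) ?_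
  rw [qpow_add]
  nth_rw 2 [h]
  exact qpow_mul_qpow_neg m

theorem qint_ne_zero {d n : ℤ} (hd : d ≠ 0) (hn : n ≠ 0) : qint d n ≠ 0 :=
  div_ne_zero (qpow_sub_qpow_neg_ne_zero (mul_ne_zero hd hn)) (qpow_sub_qpow_neg_ne_zero hd)

theorem qfact_ne_zero {d : ℤ} (hd : d ≠ 0) : ∀ n, qfact d n ≠ 0
  | 0 => one_ne_zero
  | n + 1 => mul_ne_zero (qfact_ne_zero hd n) (qint_ne_zero hd (by omega))

theorem qint_zero_right (d : ℤ) : qint d 0 = 0 := by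
  simp [qint]

theorem qint_add (d m n : ℤ) :
    qint d (m + n) = qpow (d * m) * qint d n + qpow (-(d * n)) * qint d m := by
  simp only [qint, mul_add, neg_add, qpow_add]
  ring

theorem sum_qpow_eq_sum_qpow_neg (d : ℤ) (m : ℕ) :
    ∑ j ∈ Finset.range m, qpow (d * (m - 1) - 2 * d * j) =
      ∑ j ∈ Finset.range m, qpow (-(d * (m - 1) - 2 * d * j)) := by
  rw [← Finset.sum_range_reflect]
  refine Finset.sum_congr rfl fun j hj => congrArg qpow ?_
  have hj' : j < m := Finset.mem_range.mp hj
  rw [show ((m - 1 - j : ℕ) : ℤ) = m - 1 - j by omega]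
  ring

/-! ### `q`-commutation -/

/-- The relation `T X = q^n X T`, expressing that `X` has weight `n` for the adjoint action
of `T`. -/
def QCommute {B : Type*} [Ring B] [Algebra KK B] (n : ℤ) (T X : B) : Prop :=
  T * X = qpow n • (X * T)

section Algebra

open Finset.HasAntidiagonal (antidiagonal mem_antidiagonal)

variable {B : Type*} [Ring B] [Algebra KK B] {n n' : ℤ} {T T' X Y : B}

namespace QCommute

theorem eq (h : QCommute n T X) : T * X = qpow n • (X * T) := h

theorem of_commute (h : Commute T X) : QCommute 0 T X := by
  rw [QCommute, qpow_zero, one_smul, h.eq]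

theorem mul_right (hX : QCommute n T X) (hY : QCommute n' T Y) :
    QCommute (n + n') T (X * Y) := by
  rw [QCommute, ← mul_assoc, hX.eq, smul_mul_assoc, mul_assoc, hY.eq, mul_smul_comm, smul_smul,
    ← qpow_add, mul_assoc]

theorem pow_right (h : QCommute n T X) : ∀ k : ℕ, QCommute (k * n) T (X ^ k)
  | 0 => by simpa using of_commute (Commute.one_right T)
  | k + 1 => by
    rw [pow_succ, Nat.cast_succ, add_mul, one_mul]
    exact (h.pow_right k).mul_right h

theorem smul_right (h : QCommute n T X) (c : KK) : QCommute n T (c • X) := by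
  rw [QCommute, mul_smul_comm, h.eq, smul_mul_assoc, smul_comm]

theorem sub_right (hX : QCommute n T X) (hY : QCommute n T Y) : QCommute n T (X - Y) := by
  rw [QCommute, mul_sub, hX.eq, hY.eq, sub_mul, smul_sub]

theorem mul_eq_smul (h : QCommute n T X) : X * T = qpow (-n) • (T * X) := by
  rw [h.eq, smul_smul, mul_comm, qpow_mul_qpow_neg, one_smul]

theorem inv_left (h : QCommute n T X) (hT : T * T' = 1) (hT' : T' * T = 1) :
    QCommute (-n) T' X := by
  calc T' * X = T' * (X * T) * T' := by rw [mul_assoc, mul_assoc, hT, mul_one]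
    _ = qpow (-n) • (X * T') := by
      rw [h.mul_eq_smul, mul_smul_comm, ← mul_assoc, hT', one_mul, smul_mul_assoc]

end QCommute

/-! ### Iterated `q`-commutators and Serre elements -/

theorem qint_succ_mul_qpow {k s r : ℤ} (h : s + r = k + 1) (d w : ℤ) :
    qint d (k + 1) * qpow (s * (w - d * k)) =
      qpow (s * (w - d * (k - 1))) * qint d r +
        qpow (w - 2 * d * k) * qpow ((s - 1) * (w - d * (k - 1))) * qint d s := by
  obtain rfl : k = s + r - 1 := by omega
  rw [sub_add_cancel, qint_add, add_mul, mul_right_comm, ← qpow_add, mul_right_comm (qpow (-_)),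
    ← qpow_add, ← qpow_add]
  ring_nf

/-- The `k`-fold `q`-commutator `[…[[Y, X]_{w}, X]_{w-2d}, …]` with `[Z, X]_u = Z X - q^u X Z`,
i.e. the iterated adjoint action of `X` on a vector `Y` of weight `w` for the quantum `sl₂` with
parameter `q^d`. -/
def iterQComm (d w : ℤ) (X Y : B) : ℕ → B
  | 0 => Y
  | k + 1 => iterQComm d w X Y k * X - qpow (w - 2 * d * k) • (X * iterQComm d w X Y k)

/-- The divided power `X^{(n)} = X^n / [n]!`. -/
def dividedPow (d : ℤ) (X : B) (n : ℕ) : B := (qfact d n)⁻¹ • X ^ n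

/-- The quantum Serre element `Σ_s (-1)^s X^{(s)} Y X^{(m-s)}`. -/
def serreElt (d : ℤ) (m : ℕ) (X Y : B) : B :=
  ∑ s ∈ Finset.range (m + 1),
    (-1 : KK) ^ s • (dividedPow d X s * Y * dividedPow d X (m - s))

theorem map_serreElt {B' : Type*} [Ring B'] [Algebra KK B'] (φ : B →ₐ[KK] B') (d : ℤ) (m : ℕ)
    (X Y : B) : φ (serreElt d m X Y) = serreElt d m (φ X) (φ Y) := by
  simp [serreElt, dividedPow]

section DividedPow

variable {d : ℤ}

theorem self_mul_dividedPow (hd : d ≠ 0) (X : B) (n : ℕ) :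
    X * dividedPow d X n = qint d (n + 1) • dividedPow d X (n + 1) := by
  have hn : qint d (n + 1) ≠ 0 := qint_ne_zero hd (by omega)
  rw [dividedPow, dividedPow, qfact, mul_smul_comm, ← pow_succ', smul_smul, mul_inv_rev,
    mul_inv_cancel_left₀ hn]

theorem dividedPow_mul_self (hd : d ≠ 0) (X : B) (n : ℕ) :
    dividedPow d X n * X = qint d (n + 1) • dividedPow d X (n + 1) := by
  rw [← self_mul_dividedPow hd, dividedPow, smul_mul_assoc, mul_smul_comm, pow_mul_comm']

theorem iterQComm_eq_sum (hd : d ≠ 0) (X : B) (w : ℤ) (Y : B) (k : ℕ) :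
    iterQComm d w X Y k = qfact d k • ∑ p ∈ antidiagonal k,
      ((-1) ^ p.1 * qpow (p.1 * (w - d * (k - 1)))) •
        (dividedPow d X p.1 * Y * dividedPow d X p.2) := by
  induction k with
  | zero => simp [iterQComm, dividedPow, qfact, qpow_zero]
  | succ k ih =>
    set Z : ℕ × ℕ → B := fun p => dividedPow d X p.1 * Y * dividedPow d X p.2
    have hright : (∑ p ∈ antidiagonal k,
          ((-1) ^ p.1 * qpow (p.1 * (w - d * (k - 1)))) • Z p) * X =
        ∑ p ∈ antidiagonal (k + 1),
          ((-1) ^ p.1 * qpow (p.1 * (w - d * (k - 1))) * qint d p.2) • Z p := by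
      rw [Finset.Nat.sum_antidiagonal_succ', Finset.sum_mul]
      simp [Z, qint_zero_right, mul_assoc, dividedPow_mul_self hd, smul_smul]
    have hleft : X * (∑ p ∈ antidiagonal k,
          ((-1) ^ p.1 * qpow (p.1 * (w - d * (k - 1)))) • Z p) =
        ∑ p ∈ antidiagonal (k + 1),
          (-(-1) ^ p.1 * qpow ((p.1 - 1) * (w - d * (k - 1))) * qint d p.1) • Z p := by
      rw [Finset.Nat.sum_antidiagonal_succ, Finset.mul_sum]
      simp [Z, qint_zero_right, ← mul_assoc, self_mul_dividedPow hd, smul_smul, pow_succ]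
    rw [iterQComm, ih, smul_mul_assoc, mul_smul_comm, hright, hleft, smul_comm, ← smul_sub, qfact,
      mul_smul, Finset.smul_sum, Finset.smul_sum, ← Finset.sum_sub_distrib]
    congr 1
    refine Finset.sum_congr rfl fun p hp => ?_
    have hk : (p.1 : ℤ) + p.2 = k + 1 := mod_cast mem_antidiagonal.mp hp
    rw [smul_smul, smul_smul, ← sub_smul, Nat.cast_succ, add_sub_cancel_right]
    congr 1
    linear_combination -(-1 : KK) ^ p.1 * qint_succ_mul_qpow hk d w

end DividedPow

theorem serreElt_eq_iterQComm {d : ℤ} (hd : d ≠ 0) (m : ℕ) (X Y : B) :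
    serreElt d m X Y = (qfact d m)⁻¹ • iterQComm d (d * (m - 1)) X Y m := by
  rw [iterQComm_eq_sum hd, smul_smul, inv_mul_cancel₀ (qfact_ne_zero hd m), one_smul, serreElt,
    ← Nat.succ_eq_add_one, ← Finset.Nat.sum_antidiagonal_eq_sum_range_succ
      fun s r => (-1 : KK) ^ s • (dividedPow d X s * Y * dividedPow d X r)]
  simp [qpow_zero]

theorem QCommute.iterQComm_right (hX : QCommute n T X) (hY : QCommute n' T Y) (d w : ℤ) :
    ∀ k : ℕ, QCommute (k * n + n') T (iterQComm d w X Y k)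
  | 0 => by simpa [iterQComm] using hY
  | k + 1 => by
    have ih := hX.iterQComm_right hY d w k
    rw [Nat.cast_succ, add_one_mul, add_right_comm]
    exact (ih.mul_right hX).sub_right ((add_comm n _ ▸ hX.mul_right ih).smul_right _)

theorem QCommute.serreElt_right {d : ℤ} (hd : d ≠ 0) (hX : QCommute n T X)
    (hY : QCommute n' T Y) (m : ℕ) : QCommute (m * n + n') T (serreElt d m X Y) := by
  rw [serreElt_eq_iterQComm hd]
  exact (hX.iterQComm_right hY d _ m).smul_right _

section Commutator

variable {E : B} {κ : KK} {d w : ℤ}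

theorem commute_iterQComm (hX : Commute E X) (hY : Commute E Y) (d w : ℤ) :
    ∀ k, Commute E (iterQComm d w X Y k)
  | 0 => hY
  | k + 1 =>
    have ih := commute_iterQComm hX hY d w k
    (ih.mul_right hX).sub_right ((hX.mul_right ih).smul_right _)

theorem lie_mul_sub_smul_mul (c : KK) (E X Y : B) :
    ⁅E, Y * X - c • (X * Y)⁆ =
      ⁅E, Y⁆ * X - c • (X * ⁅E, Y⁆) + (Y * ⁅E, X⁆ - c • (⁅E, X⁆ * Y)) := by
  simp only [Ring.lie_def, mul_sub, sub_mul, smul_sub, mul_smul_comm, smul_mul_assoc, mul_assoc]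
  abel

theorem lie_iterQComm_of_commute_left (hX : Commute E X) (d w : ℤ) (Y : B) :
    ∀ k, ⁅E, iterQComm d w X Y k⁆ = iterQComm d w X ⁅E, Y⁆ k
  | 0 => rfl
  | k + 1 => by
    rw [iterQComm, iterQComm, lie_mul_sub_smul_mul, hX.lie_eq,
      lie_iterQComm_of_commute_left hX d w Y k]
    simp

theorem iterQComm_smul_sub (d w : ℤ) (c : KK) (X Y Z : B) :
    ∀ k, iterQComm d w X (c • (Y - Z)) k = c • (iterQComm d w X Y k - iterQComm d w X Z k)
  | 0 => rfl
  | k + 1 => by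
    simp only [iterQComm, iterQComm_smul_sub d w c X Y Z k]
    simp only [mul_sub, sub_mul, mul_smul_comm, smul_mul_assoc, smul_sub, smul_comm c]
    abel

theorem iterQComm_eq_prod_smul (hX : QCommute n T X) (d w : ℤ) (k : ℕ) :
    iterQComm d w X T k =
      (∏ j ∈ Finset.range k, (qpow n - qpow (w - 2 * d * j))) • (X ^ k * T) := by
  induction k with
  | zero => simp [iterQComm]
  | succ k ih =>
    rw [iterQComm, ih, smul_mul_assoc, mul_assoc, hX.eq,
      mul_smul_comm, mul_smul_comm, ← mul_assoc, ← mul_assoc, ← pow_succ, ← pow_succ',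
      Finset.prod_range_succ, smul_smul, smul_smul, ← sub_smul]
    congr 1
    ring

theorem lie_iterQComm_succ_of_lie_eq (hEX : ⁅E, X⁆ = κ • (T - T'))
    {k : ℕ} (hT : QCommute (w - 2 * d * k) T (iterQComm d w X Y k))
    (hT' : QCommute (-(w - 2 * d * k)) T' (iterQComm d w X Y k)) :
    ⁅E, iterQComm d w X Y (k + 1)⁆ =
      ⁅E, iterQComm d w X Y k⁆ * X - qpow (w - 2 * d * k) • (X * ⁅E, iterQComm d w X Y k⁆) +
        (κ * (qpow (-(w - 2 * d * k)) - qpow (w - 2 * d * k))) • (T * iterQComm d w X Y k) := by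
  rw [iterQComm, lie_mul_sub_smul_mul, hEX, smul_mul_assoc, mul_smul_comm, smul_comm, ← smul_sub,
    mul_sub, sub_mul, hT.mul_eq_smul, hT'.mul_eq_smul, neg_neg, mul_smul, smul_sub (qpow _),
    sub_sub_sub_cancel_right, sub_smul]

theorem lie_iterQComm_succ (hEX : ⁅E, X⁆ = κ • (T - T')) (hEY : Commute E Y)
    (hTX : QCommute (-(2 * d)) T X) (hTX' : QCommute (2 * d) T' X)
    (hTY : QCommute w T Y) (hTY' : QCommute (-w) T' Y) (k : ℕ) :
    ⁅E, iterQComm d w X Y (k + 1)⁆ =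
      (κ * ∑ j ∈ Finset.range (k + 1), (qpow (-(w - 2 * d * j)) - qpow (w - 2 * d * j))) •
        (T * iterQComm d w X Y k) := by
  have hT (k : ℕ) : QCommute (w - 2 * d * k) T (iterQComm d w X Y k) := by
    convert hTX.iterQComm_right hTY d w k using 1
    ring
  have hT' (k : ℕ) : QCommute (-(w - 2 * d * k)) T' (iterQComm d w X Y k) := by
    convert hTX'.iterQComm_right hTY' d w k using 1
    ring
  induction k with
  | zero =>
    rw [lie_iterQComm_succ_of_lie_eq hEX (hT 0) (hT' 0)]
    simp [iterQComm, hEY.lie_eq]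
  | succ k ih =>
    have hX : qpow (w - 2 * d * (k + 1)) • (X * T) = qpow (w - 2 * d * k) • (T * X) := by
      rw [hTX.mul_eq_smul, smul_smul, ← qpow_add]
      ring_nf
    rw [lie_iterQComm_succ_of_lie_eq hEX (hT _) (hT' _), ih, Finset.sum_range_succ _ (k + 1),
      mul_add, add_smul]
    congr 1
    rw [iterQComm, smul_mul_assoc, mul_smul_comm, ← mul_assoc X, smul_comm, ← smul_sub,
      ← smul_mul_assoc, Nat.cast_succ, hX, mul_sub, smul_mul_assoc, mul_smul_comm, mul_assoc T,
      mul_assoc T]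

theorem commute_serreElt_of_lie_left (hd : d ≠ 0) {m : ℕ} (hEX : ⁅E, X⁆ = κ • (T - T'))
    (hEY : Commute E Y) (hTX : QCommute (-(2 * d)) T X) (hTX' : QCommute (2 * d) T' X)
    (hTY : QCommute (d * (m - 1)) T Y) (hTY' : QCommute (-(d * (m - 1))) T' Y) :
    Commute E (serreElt d m X Y) := by
  rw [serreElt_eq_iterQComm hd]
  refine Commute.smul_right ?_ _
  cases m with
  | zero => exact hEY
  | succ m =>
    rw [commute_iff_lie_eq, lie_iterQComm_succ hEX hEY hTX hTX' hTY hTY', Finset.sum_sub_distrib,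
      sum_qpow_eq_sum_qpow_neg, sub_self, mul_zero, zero_smul]

theorem commute_serreElt_of_lie_right (hd : d ≠ 0) {m : ℕ} (hm : m ≠ 0) (hEX : Commute E X)
    (hEY : ⁅E, Y⁆ = κ • (T - T')) (hT : QCommute (d * (m - 1)) T X)
    (hT' : QCommute (-(d * (m - 1))) T' X) : Commute E (serreElt d m X Y) := by
  have hTm : iterQComm d (d * (m - 1)) X T m = 0 := by
    rw [iterQComm_eq_prod_smul hT, Finset.prod_eq_zero (i := 0) (by simpa [Nat.pos_iff_ne_zero]),
      zero_smul]
    simp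
  have hTm' : iterQComm d (d * (m - 1)) X T' m = 0 := by
    rw [iterQComm_eq_prod_smul hT', Finset.prod_eq_zero (i := m - 1)
      (Finset.mem_range.mpr (by omega)), zero_smul]
    rw [Nat.cast_pred (Nat.pos_of_ne_zero hm), sub_eq_zero]
    ring_nf
  rw [serreElt_eq_iterQComm hd]
  refine Commute.smul_right ?_ _
  rw [commute_iff_lie_eq, lie_iterQComm_of_commute_left hEX, hEY, iterQComm_smul_sub, hTm, hTm',
    sub_zero, smul_zero]

theorem commute_serreElt {ι : Type} (C : CartanData ι) {X : ι → B} {k : ι}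
    (hne : ∀ j, j ≠ k → Commute E (X j)) (hk : ⁅E, X k⁆ = κ • (T - T'))
    (hT : ∀ j, QCommute (-(C.d k * C.a k j)) T (X j))
    (hT' : ∀ j, QCommute (C.d k * C.a k j) T' (X j)) {i j : ι} (hij : i ≠ j) :
    Commute E (serreElt (C.d i) (1 - C.a i j).toNat (X i) (X j)) := by
  have hd : C.d i ≠ 0 := (C.d_pos i).ne'
  have ha := C.a_offdiag i j hij
  have hm : (((1 - C.a i j).toNat : ℕ) : ℤ) - 1 = -C.a i j := by
    omega
  have hw : C.d i * (((1 - C.a i j).toNat : ℕ) - 1) = -(C.d i * C.a i j) := by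
    rw [hm, mul_neg]
  by_cases hik : i = k
  · subst hik
    refine commute_serreElt_of_lie_left hd hk (hne j hij.symm) ?_ ?_ ?_ ?_
    · simpa [C.a_diag, mul_comm] using hT i
    · simpa [C.a_diag, mul_comm] using hT' i
    · rw [hw]; exact hT j
    · rw [hw, neg_neg]; exact hT' j
  by_cases hjk : j = k
  · subst hjk
    refine commute_serreElt_of_lie_right hd (by omega) (hne i hij) hk ?_ ?_
    · rw [hw, C.symm]; exact hT i
    · rw [hw, neg_neg, C.symm]; exact hT' i
  · rw [serreElt_eq_iterQComm hd]
    exact (commute_iterQComm (hne i hik) (hne j hjk) _ _ _).smul_right _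

end Commutator

section Operators

variable {V : Type*} [AddCommGroup V] [Module KK V] {v : V}

theorem QCommute.apply_apply {T X : Module.End KK V} (h : QCommute n T X) (v : V) :
    T (X v) = qpow n • X (T v) :=
  LinearMap.congr_fun h v

theorem iterQComm_apply_eq_zero {X Y : Module.End KK V} (hX : X v = 0) (hY : Y v = 0)
    (d w : ℤ) : ∀ k, iterQComm d w X Y k v = 0
  | 0 => hY
  | k + 1 => by
    simp [iterQComm, hX, iterQComm_apply_eq_zero hX hY d w k]

theorem serreElt_apply_eq_zero {d : ℤ} (hd : d ≠ 0) {X Y : Module.End KK V} (hX : X v = 0)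
    (hY : Y v = 0) (m : ℕ) : serreElt d m X Y v = 0 := by
  rw [serreElt_eq_iterQComm hd, LinearMap.smul_apply, iterQComm_apply_eq_zero hX hY, smul_zero]

theorem apply_pow_succ_apply {E X T T' : Module.End KK V} {κ : KK} {c d : ℤ}
    (hE : E v = 0) (hEX : ⁅E, X⁆ = κ • (T - T')) (hTX : QCommute (-(2 * d)) T X)
    (hTX' : QCommute (2 * d) T' X) (hT : T v = qpow c • v) (hT' : T' v = qpow (-c) • v) (k : ℕ) :
    E ((X ^ (k + 1)) v) =
      (κ * ∑ j ∈ Finset.range (k + 1), (qpow (c - 2 * d * j) - qpow (-(c - 2 * d * j)))) •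
        (X ^ k) v := by
  have hTk (k : ℕ) : T ((X ^ k) v) = qpow (c - 2 * d * k) • (X ^ k) v := by
    rw [(hTX.pow_right k).apply_apply, hT, map_smul, smul_smul, ← qpow_add]
    ring_nf
  have hTk' (k : ℕ) : T' ((X ^ k) v) = qpow (-(c - 2 * d * k)) • (X ^ k) v := by
    rw [(hTX'.pow_right k).apply_apply, hT', map_smul, smul_smul, ← qpow_add]
    ring_nf
  have hstep (k : ℕ) : E ((X ^ (k + 1)) v) = X (E ((X ^ k) v)) +
      (κ * (qpow (c - 2 * d * k) - qpow (-(c - 2 * d * k)))) • (X ^ k) v := by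
    have hcomm := LinearMap.congr_fun hEX ((X ^ k) v)
    rw [Ring.lie_def, LinearMap.sub_apply, sub_eq_iff_eq_add', LinearMap.smul_apply,
      LinearMap.sub_apply, hTk, hTk', ← sub_smul, smul_smul] at hcomm
    rw [pow_succ']
    exact hcomm
  induction k with
  | zero => simpa [hE] using hstep 0
  | succ k ih =>
    rw [hstep, ih, map_smul, ← Module.End.mul_apply, ← pow_succ', ← add_smul, ← mul_add,
      ← Finset.sum_range_succ]

theorem apply_pow_succ_apply_eq_zero {E X T T' : Module.End KK V} {κ : KK} {d : ℤ} {n : ℕ}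
    (hE : E v = 0) (hEX : ⁅E, X⁆ = κ • (T - T')) (hTX : QCommute (-(2 * d)) T X)
    (hTX' : QCommute (2 * d) T' X) (hT : T v = qpow (d * n) • v)
    (hT' : T' v = qpow (-(d * n)) • v) : E ((X ^ (n + 1)) v) = 0 := by
  have hsum := sum_qpow_eq_sum_qpow_neg d (n + 1)
  rw [Nat.cast_succ, add_sub_cancel_right] at hsum
  rw [apply_pow_succ_apply hE hEX hTX hTX' hT hT', Finset.sum_sub_distrib, hsum, sub_self,
    mul_zero, zero_smul]

end Operators

end Algebra

/-! ### Algebras generated by a set -/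

section Adjoin

variable {R A M : Type*} [CommSemiring R] [Semiring A] [Algebra R A] [AddCommMonoid M]
  [Module R M] [Module A M] [IsScalarTower R A M] {s : Set A}

theorem smul_mem_of_mem_adjoin {N : Submodule R M} (hs : ∀ a ∈ s, ∀ x ∈ N, a • x ∈ N) {a : A}
    (ha : a ∈ Algebra.adjoin R s) {x : M} (hx : x ∈ N) : a • x ∈ N := by
  induction ha using Algebra.adjoin_induction generalizing x with
  | mem a ha => exact hs a ha x hx
  | algebraMap r => simpa using N.smul_mem r hx
  | add a b _ _ iha ihb => simpa [add_smul] using N.add_mem (iha hx) (ihb hx)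
  | mul a b _ _ iha ihb => simpa [mul_smul] using iha (ihb hx)

theorem map_mem_span_of_adjoin_eq_top (hs : Algebra.adjoin R s = ⊤) {G : Set M} {D : M →ₗ[R] M}
    (hG : ∀ g ∈ G, D g ∈ Submodule.span A G)
    (hD : ∀ a ∈ s, ∀ x, D x ∈ Submodule.span A G → x ∈ Submodule.span A G →
      D (a • x) ∈ Submodule.span A G) {x : M} (hx : x ∈ Submodule.span A G) :
    D x ∈ Submodule.span A G := by
  let S := (Submodule.span A G).restrictScalars R
  have hsmul (a : A) {x : M} (hx : x ∈ S ⊓ S.comap D) : a • x ∈ S ⊓ S.comap D :=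
    smul_mem_of_mem_adjoin (s := s) (hx := hx) (ha := hs ▸ Algebra.mem_top) fun a ha x hx =>
      Submodule.mem_inf.mpr ⟨Submodule.smul_mem _ a hx.1, hD a ha x hx.2 hx.1⟩
  suffices h : x ∈ S ⊓ S.comap D from h.2
  induction hx using Submodule.span_induction with
  | mem g hg => exact ⟨Submodule.subset_span hg, hG g hg⟩
  | zero => exact zero_mem _
  | add x y _ _ ihx ihy => exact add_mem ihx ihy
  | smul a x _ ih => exact hsmul a ih

end Adjoin

section FreeDeriv

variable {R : Type*} [CommRing R] {X : Type*}

/-- The action of the free algebra on pairs by the matrices with rows `(x_j, 0)` and `(A_j, x_j)`;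
it encodes twisted derivations of the free algebra, see `freeDeriv`. -/
def freeDerivAux (A : X → Module.End R (FreeAlgebra R X)) :
    FreeAlgebra R X →ₐ[R] Module.End R (FreeAlgebra R X × FreeAlgebra R X) :=
  FreeAlgebra.lift R fun j =>
    let L := Algebra.lmul R (FreeAlgebra R X) (FreeAlgebra.ι R j)
    L.prodMap L + LinearMap.inr R _ _ ∘ₗ A j ∘ₗ LinearMap.fst R _ _

theorem freeDerivAux_apply_fst (A : X → Module.End R (FreeAlgebra R X)) (z : FreeAlgebra R X) :
    ∀ p, (freeDerivAux A z p).1 = z * p.1 := by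
  induction z using FreeAlgebra.induction with
  | grade0 r => simp [Algebra.algebraMap_eq_smul_one]
  | grade1 j => simp [freeDerivAux]
  | mul x y ihx ihy => simp [ihx, ihy, mul_assoc]
  | add x y ihx ihy => simp [ihx, ihy, add_mul]

/-- The linear endomorphism `D` of the free algebra determined by `D 1 = 0` and the twisted
Leibniz rule `D (x_j z) = x_j D z + A_j z`. -/
def freeDeriv (A : X → Module.End R (FreeAlgebra R X)) : Module.End R (FreeAlgebra R X) :=
  LinearMap.snd R _ _ ∘ₗ LinearMap.applyₗ (1, 0) ∘ₗ (freeDerivAux A).toLinearMap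

theorem freeDeriv_one (A : X → Module.End R (FreeAlgebra R X)) : freeDeriv A 1 = 0 := by
  simp [freeDeriv]

theorem freeDeriv_ι_mul (A : X → Module.End R (FreeAlgebra R X)) (j : X) (z : FreeAlgebra R X) :
    freeDeriv A (FreeAlgebra.ι R j * z) = FreeAlgebra.ι R j * freeDeriv A z + A j z := by
  have hz := freeDerivAux_apply_fst A z (1, 0)
  rw [mul_one] at hz
  have hj (p) : (freeDerivAux A (FreeAlgebra.ι R j) p).2 = FreeAlgebra.ι R j * p.2 + A j p.1 := by
    simp [freeDerivAux]
  simp [freeDeriv, hj, hz]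

end FreeDeriv

/-! ### The free highest weight module -/

section HighestWeight

variable {ι : Type}

/-- The action of `f_i` on the free algebra on the `f`'s. -/
def fOp (i : ι) : Module.End KK (FreeAlgebra KK ι) :=
  Algebra.lmul KK (FreeAlgebra KK ι) (FreeAlgebra.ι KK i)

theorem eq_zero_of_qCommute_fOp {D : Module.End KK (FreeAlgebra KK ι)} {c : ι → ℤ} (hD : D 1 = 0)
    (hf : ∀ j, QCommute (c j) D (fOp j)) : D = 0 := by
  ext z
  suffices h : z • (1 : FreeAlgebra KK ι) ∈ LinearMap.ker D by simpa using h
  refine smul_mem_of_mem_adjoin (s := Set.range (FreeAlgebra.ι KK)) ?_ ?_ hD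
  · rintro _ ⟨j, rfl⟩ x hx
    have := (hf j).apply_apply x
    rw [LinearMap.mem_ker.mp hx, map_zero, smul_zero] at this
    exact this
  · rw [FreeAlgebra.adjoin_range_ι]
    exact Algebra.mem_top

section WeightOp

variable (c c' : ι → ℤ) (n n' : ℤ)

/-- The diagonal operator on the free algebra with eigenvalue `q^{n + c_{j_1} + ⋯ + c_{j_r}}` on the
monomial `f_{j_1} ⋯ f_{j_r}`. -/
def weightOp : Module.End KK (FreeAlgebra KK ι) :=
  qpow n • (FreeAlgebra.lift KK fun j => qpow (c j) • FreeAlgebra.ι KK j).toLinearMap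

theorem weightOp_apply_one : weightOp c n 1 = qpow n • 1 := by
  simp [weightOp]

theorem qCommute_weightOp_fOp (j : ι) : QCommute (c j) (weightOp c n) (fOp j) := by
  refine LinearMap.ext fun z => ?_
  simp only [weightOp, fOp, Module.End.mul_apply, LinearMap.smul_apply, AlgHom.toLinearMap_apply,
    Algebra.coe_lmul_eq_mul, LinearMap.mul_apply', map_mul, FreeAlgebra.lift_ι_apply,
    smul_mul_assoc, mul_smul_comm]
  rw [smul_comm]

theorem weightOp_zero : weightOp (0 : ι → ℤ) 0 = 1 := by
  have h : FreeAlgebra.lift KK (fun j : ι => qpow 0 • FreeAlgebra.ι KK j) = AlgHom.id KK _ :=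
    FreeAlgebra.hom_ext <| funext fun j => by simp [qpow_zero]
  refine LinearMap.ext fun z => ?_
  simpa [weightOp, qpow_zero] using AlgHom.congr_fun h z

theorem weightOp_mul_weightOp : weightOp c n * weightOp c' n' = weightOp (c + c') (n + n') := by
  have h : (FreeAlgebra.lift KK fun j => qpow (c j) • FreeAlgebra.ι KK j).comp
      (FreeAlgebra.lift KK fun j => qpow (c' j) • FreeAlgebra.ι KK j) =
        FreeAlgebra.lift KK fun j => qpow ((c + c') j) • FreeAlgebra.ι KK j :=
    FreeAlgebra.hom_ext <| funext fun j => by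
      simp [qpow_add, smul_smul, mul_comm]
  refine LinearMap.ext fun z => ?_
  simp only [weightOp, ← h, Module.End.mul_apply, LinearMap.smul_apply, map_smul, smul_smul,
    AlgHom.toLinearMap_apply, AlgHom.comp_apply, qpow_add,
    mul_comm (qpow n)]

end WeightOp

section Operators

variable (C : CartanData ι) (lam : ι → ℤ)

/-- The action of `t_i^m` on the free algebra, with highest weight `Λ` given by
`⟨h_i, Λ⟩ = lam i`. -/
def tOp (i : ι) (m : ℤ) : Module.End KK (FreeAlgebra KK ι) :=
  weightOp (fun j => -(m * (C.d i * C.a i j))) (m * (C.d i * lam i))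

theorem tOp_apply_one (i : ι) (m : ℤ) : tOp C lam i m 1 = qpow (m * (C.d i * lam i)) • 1 :=
  weightOp_apply_one _ _

theorem qCommute_tOp_fOp (i : ι) (m : ℤ) (j : ι) :
    QCommute (-(m * (C.d i * C.a i j))) (tOp C lam i m) (fOp j) :=
  qCommute_weightOp_fOp _ _ j

theorem commute_tOp (i j : ι) (m n : ℤ) : Commute (tOp C lam i m) (tOp C lam j n) := by
  rw [Commute, SemiconjBy, tOp, tOp, weightOp_mul_weightOp, weightOp_mul_weightOp, add_comm,
    add_comm (n * _)]

theorem tOp_mul_tOp_neg (i : ι) (m : ℤ) : tOp C lam i m * tOp C lam i (-m) = 1 := by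
  rw [tOp, tOp, weightOp_mul_weightOp, ← weightOp_zero]
  congr 1
  · ext j
    simp
  · ring

variable [DecidableEq ι]

/-- The action of `e_k` on the free algebra, determined by `e_k 1 = 0` and the relations
`[e_k, f_j] = δ_{kj} (t_k - t_k⁻¹) / (q_k - q_k⁻¹)`. -/
def eOp (k : ι) : Module.End KK (FreeAlgebra KK ι) :=
  freeDeriv fun j => if k = j then
    (qpow (C.d k) - qpow (-C.d k))⁻¹ • (tOp C lam k 1 - tOp C lam k (-1)) else 0

theorem eOp_apply_one (k : ι) : eOp C lam k 1 = 0 := freeDeriv_one _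

theorem lie_eOp_fOp (k j : ι) :
    ⁅eOp C lam k, fOp j⁆ = if k = j then
      (qpow (C.d k) - qpow (-C.d k))⁻¹ • (tOp C lam k 1 - tOp C lam k (-1)) else 0 := by
  refine LinearMap.ext fun z => ?_
  rw [Ring.lie_def, LinearMap.sub_apply, sub_eq_iff_eq_add']
  exact freeDeriv_ι_mul _ j z

theorem qCommute_tOp_lie_eOp_fOp (i : ι) (m : ℤ) (k j : ι) :
    QCommute (m * (C.d i * C.a i k) - m * (C.d i * C.a i j)) (tOp C lam i m)
      ⁅eOp C lam k, fOp j⁆ := by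
  rw [lie_eOp_fOp]
  split_ifs with hkj
  · rw [hkj, sub_self]
    have hcomm := (commute_tOp C lam i j m 1).sub_right (commute_tOp C lam i j m (-1))
    exact .of_commute (hcomm.smul_right _)
  · simp [QCommute]

theorem qCommute_tOp_eOp (i : ι) (m : ℤ) (k : ι) :
    QCommute (m * (C.d i * C.a i k)) (tOp C lam i m) (eOp C lam k) := by
  refine sub_eq_zero.mp
    (eq_zero_of_qCommute_fOp (c := fun j => -(m * (C.d i * C.a i j))) ?_ fun j => ?_)
  · simp [eOp_apply_one, tOp_apply_one]
  set T := tOp C lam i m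
  set E := eOp C lam k
  set w := m * (C.d i * C.a i k)
  set c := m * (C.d i * C.a i j)
  have hf : QCommute (-c) T (fOp j) := qCommute_tOp_fOp C lam i m j
  have hef : E * fOp j = fOp j * E + ⁅E, fOp j⁆ := by
    rw [Ring.lie_def, add_sub_cancel]
  have hTE : T * E * fOp j =
      qpow (-c) • (fOp j * (T * E)) + qpow w • qpow (-c) • (⁅E, fOp j⁆ * T) := by
    rw [mul_assoc, hef, mul_add, ← mul_assoc, hf.eq, (qCommute_tOp_lie_eOp_fOp C lam i m k j).eq,
      smul_mul_assoc, mul_assoc, sub_eq_add_neg, qpow_add, mul_smul]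
  have hET : E * T * fOp j = qpow (-c) • (fOp j * (E * T) + ⁅E, fOp j⁆ * T) := by
    rw [mul_assoc, hf.eq, mul_smul_comm, ← mul_assoc, hef, add_mul, mul_assoc]
  rw [QCommute, sub_mul, smul_mul_assoc, hTE, hET, smul_comm (qpow w) (qpow (-c)), ← smul_add,
    smul_comm (qpow w) (qpow (-c)), ← smul_sub, smul_add, add_sub_add_right_eq_sub, mul_sub,
    mul_smul_comm]

theorem commute_eOp_serreElt_fOp (k : ι) {i j : ι} (hij : i ≠ j) :
    Commute (eOp C lam k) (serreElt (C.d i) (1 - C.a i j).toNat (fOp i) (fOp j)) := by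
  refine commute_serreElt C (k := k) (T := tOp C lam k 1) (T' := tOp C lam k (-1))
    (κ := (qpow (C.d k) - qpow (-C.d k))⁻¹) (fun l hl => ?_) ?_ (fun l => ?_) (fun l => ?_) hij
  · rw [commute_iff_lie_eq, lie_eOp_fOp, if_neg hl.symm]
  · rw [lie_eOp_fOp, if_pos rfl]
  · simpa using qCommute_tOp_fOp C lam k 1 l
  · simpa using qCommute_tOp_fOp C lam k (-1) l

theorem commute_fOp_serreElt_eOp (k : ι) {i j : ι} (hij : i ≠ j) :
    Commute (fOp k) (serreElt (C.d i) (1 - C.a i j).toNat (eOp C lam i) (eOp C lam j)) := by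
  have hlie (l : ι) : ⁅fOp k, eOp C lam l⁆ = -⁅eOp C lam l, fOp k⁆ := by
    rw [Ring.lie_def, Ring.lie_def, neg_sub]
  refine commute_serreElt C (k := k) (T := tOp C lam k (-1)) (T' := tOp C lam k 1)
    (κ := (qpow (C.d k) - qpow (-C.d k))⁻¹) (fun l hl => ?_) ?_ (fun l => ?_) (fun l => ?_) hij
  · rw [commute_iff_lie_eq, hlie, lie_eOp_fOp, if_neg hl, neg_zero]
  · rw [hlie, lie_eOp_fOp, if_pos rfl, ← neg_sub (tOp C lam k 1), smul_neg]
  · simpa using qCommute_tOp_eOp C lam k (-1) l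
  · simpa using qCommute_tOp_eOp C lam k 1 l

theorem serreElt_eOp_eq_zero {i j : ι} (hij : i ≠ j) :
    serreElt (C.d i) (1 - C.a i j).toNat (eOp C lam i) (eOp C lam j) = 0 :=
  eq_zero_of_qCommute_fOp (c := 0)
    (serreElt_apply_eq_zero (C.d_pos i).ne' (eOp_apply_one C lam i) (eOp_apply_one C lam j) _)
    fun k => .of_commute (commute_fOp_serreElt_eOp C lam k hij).symm

end Operators

end HighestWeight

/-! ### The representation of `U_q(𝔭_J)` -/

section SingularIdeal

variable {ι : Type} (C : CartanData ι) (J : Set ι) (lam : ι → ℤ)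

/-- The left ideal of the free algebra on the `f`'s generated by the two-sided ideal of the Serre
relations and by the elements `f_j^{⟨h_j, Λ⟩ + 1}` for `j ∈ J`. -/
def singularIdeal : Submodule (FreeAlgebra KK ι) (FreeAlgebra KK ι) :=
  Submodule.span (FreeAlgebra KK ι)
    ({x | ∃ i j, i ≠ j ∧ ∃ w, x = serreElt (C.d i) (1 - C.a i j).toNat (FreeAlgebra.ι KK i)
        (FreeAlgebra.ι KK j) * w} ∪
      {x | ∃ j ∈ J, x = FreeAlgebra.ι KK j ^ (lam j + 1).toNat})

theorem serreElt_fOp_apply (d : ℤ) (m : ℕ) (i j : ι) (w : FreeAlgebra KK ι) :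
    serreElt d m (fOp i) (fOp j) w =
      serreElt d m (FreeAlgebra.ι KK i) (FreeAlgebra.ι KK j) * w := by
  rw [fOp, fOp, ← map_serreElt]
  rfl

theorem fOp_pow_apply_one (j : ι) (n : ℕ) : (fOp j ^ n) 1 = FreeAlgebra.ι KK j ^ n := by
  rw [fOp, ← map_pow]
  exact mul_one _

theorem serreElt_fOp_apply_mem_singularIdeal {i j : ι} (hij : i ≠ j) (w : FreeAlgebra KK ι) :
    serreElt (C.d i) (1 - C.a i j).toNat (fOp i) (fOp j) w ∈ singularIdeal C J lam := by
  rw [serreElt_fOp_apply]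
  exact Submodule.subset_span (.inl ⟨i, j, hij, w, rfl⟩)

variable {C J lam}

theorem fOp_pow_apply_one_mem_singularIdeal {j : ι} (hj : j ∈ J) :
    (fOp j ^ (lam j + 1).toNat) 1 ∈ singularIdeal C J lam := by
  rw [fOp_pow_apply_one]
  exact Submodule.subset_span (.inr ⟨j, hj, rfl⟩)

theorem fOp_mem_singularIdeal (i : ι) {x : FreeAlgebra KK ι} (hx : x ∈ singularIdeal C J lam) :
    fOp i x ∈ singularIdeal C J lam :=
  Submodule.smul_mem _ (FreeAlgebra.ι KK i) hx

theorem map_mem_singularIdeal {D : Module.End KK (FreeAlgebra KK ι)}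
    (hserre : ∀ i j, i ≠ j → ∀ w,
      D (serreElt (C.d i) (1 - C.a i j).toNat (fOp i) (fOp j) w) ∈ singularIdeal C J lam)
    (hpow : ∀ j ∈ J, D ((fOp j ^ (lam j + 1).toNat) 1) ∈ singularIdeal C J lam)
    (hf : ∀ j x, D x ∈ singularIdeal C J lam → x ∈ singularIdeal C J lam →
      D (fOp j x) ∈ singularIdeal C J lam)
    {x : FreeAlgebra KK ι} (hx : x ∈ singularIdeal C J lam) : D x ∈ singularIdeal C J lam := by
  refine map_mem_span_of_adjoin_eq_top (FreeAlgebra.adjoin_range_ι KK ι) ?_ ?_ hx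
  · rintro _ (⟨i, j, hij, w, rfl⟩ | ⟨j, hj, rfl⟩)
    · rw [← serreElt_fOp_apply]
      exact hserre i j hij w
    · rw [← fOp_pow_apply_one]
      exact hpow j hj
  · rintro _ ⟨j, rfl⟩
    exact hf j

theorem tOp_mem_singularIdeal (k : ι) (m : ℤ) {x : FreeAlgebra KK ι}
    (hx : x ∈ singularIdeal C J lam) : tOp C lam k m x ∈ singularIdeal C J lam := by
  have hT (j : ι) := qCommute_tOp_fOp C lam k m j
  refine map_mem_singularIdeal (fun i j hij w => ?_) (fun j hj => ?_) (fun j x hx _ => ?_) hx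
  · rw [((hT i).serreElt_right (C.d_pos i).ne' (hT j) _).apply_apply]
    exact Submodule.smul_of_tower_mem _ _ (serreElt_fOp_apply_mem_singularIdeal C J lam hij _)
  · rw [((hT j).pow_right _).apply_apply, tOp_apply_one, map_smul]
    exact Submodule.smul_of_tower_mem _ _
      (Submodule.smul_of_tower_mem _ _ (fOp_pow_apply_one_mem_singularIdeal hj))
  · rw [(hT j).apply_apply]
    exact Submodule.smul_of_tower_mem _ _ (fOp_mem_singularIdeal j hx)

variable [DecidableEq ι]

theorem eOp_fOp_pow_apply_one (k : ι) {j : ι} (hj : 0 ≤ lam j) :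
    eOp C lam k ((fOp j ^ (lam j + 1).toNat) 1) = 0 := by
  by_cases hkj : k = j
  · subst hkj
    have hn : ((lam k).toNat : ℤ) = lam k := Int.toNat_of_nonneg hj
    rw [show (lam k + 1).toNat = (lam k).toNat + 1 by omega]
    refine apply_pow_succ_apply_eq_zero (d := C.d k) (T := tOp C lam k 1) (T' := tOp C lam k (-1))
      (κ := (qpow (C.d k) - qpow (-C.d k))⁻¹) (eOp_apply_one C lam k) ?_ ?_ ?_ ?_ ?_
    · rw [lie_eOp_fOp, if_pos rfl]
    · simpa [C.a_diag, mul_comm] using qCommute_tOp_fOp C lam k 1 k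
    · simpa [C.a_diag, mul_comm] using qCommute_tOp_fOp C lam k (-1) k
    · simp [tOp_apply_one, hn]
    · simp [tOp_apply_one, hn]
  · have hcomm : Commute (eOp C lam k) (fOp j) := by
      rw [commute_iff_lie_eq, lie_eOp_fOp, if_neg hkj]
    rw [← Module.End.mul_apply, (hcomm.pow_right _).eq, Module.End.mul_apply, eOp_apply_one,
      map_zero]

theorem eOp_mem_singularIdeal (hdom : ∀ j ∈ J, 0 ≤ lam j) (k : ι) {x : FreeAlgebra KK ι}
    (hx : x ∈ singularIdeal C J lam) : eOp C lam k x ∈ singularIdeal C J lam := by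
  refine map_mem_singularIdeal (fun i j hij w => ?_) (fun j hj => ?_) (fun j x hEx hx => ?_) hx
  · rw [← Module.End.mul_apply, (commute_eOp_serreElt_fOp C lam k hij).eq]
    exact serreElt_fOp_apply_mem_singularIdeal C J lam hij _
  · rw [eOp_fOp_pow_apply_one k (hdom j hj)]
    exact zero_mem _
  · have hlie : eOp C lam k (fOp j x) = fOp j (eOp C lam k x) + ⁅eOp C lam k, fOp j⁆ x := by
      rw [Ring.lie_def, LinearMap.sub_apply]
      exact (add_sub_cancel _ _).symm
    rw [hlie, lie_eOp_fOp]
    refine add_mem (fOp_mem_singularIdeal j hEx) ?_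
    split_ifs
    · exact Submodule.smul_of_tower_mem _ (_ : KK)
        (sub_mem (tOp_mem_singularIdeal k 1 hx) (tOp_mem_singularIdeal k (-1) hx))
    · exact zero_mem _

end SingularIdeal

section Representation

variable {ι : Type} [DecidableEq ι] (C : CartanData ι) (J : Set ι) (lam : ι → ℤ)

/-- The operators by which the generators of `U_q(𝔭_J)` act on the free algebra on the `f`'s. -/
def genOp : QGenP ι J → Module.End KK (FreeAlgebra KK ι)
  | .e j => eOp C lam j
  | .f i => fOp i
  | .t i => tOp C lam i 1
  | .tinv i => tOp C lam i (-1)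

/-- The action of the free algebra on the generators of `U_q(𝔭_J)` by the operators `genOp`; it
satisfies all relations of `U_q(𝔭_J)` except the Serre relations in the `f`'s. -/
def freeRep : FAP ι J →ₐ[KK] Module.End KK (FreeAlgebra KK ι) :=
  FreeAlgebra.lift KK (genOp C J lam)

theorem freeRep_pge (j : J) : freeRep C J lam (pge J j) = eOp C lam j :=
  FreeAlgebra.lift_ι_apply _ _

theorem freeRep_pgf (i : ι) : freeRep C J lam (pgf J i) = fOp i :=
  FreeAlgebra.lift_ι_apply _ _

theorem freeRep_pgT (i : ι) : freeRep C J lam (pgT J i) = tOp C lam i 1 :=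
  FreeAlgebra.lift_ι_apply _ _

theorem freeRep_pgTinv (i : ι) : freeRep C J lam (pgTinv J i) = tOp C lam i (-1) :=
  FreeAlgebra.lift_ι_apply _ _

theorem freeRep_pserreE (i j : J) :
    freeRep C J lam (pserreE C J i j) =
      serreElt (C.d i) (1 - C.a i j).toNat (eOp C lam i) (eOp C lam j) := by
  rw [← freeRep_pge C J, ← freeRep_pge C J, ← map_serreElt]
  rfl

theorem freeRep_pserreF (i j : ι) :
    freeRep C J lam (pserreF C J i j) =
      serreElt (C.d i) (1 - C.a i j).toNat (fOp i) (fOp j) := by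
  rw [← freeRep_pgf C J lam, ← freeRep_pgf C J lam, ← map_serreElt]
  rfl

theorem freeRep_sub_apply_mem_singularIdeal {a b : FAP ι J} (h : QRelP C J a b)
    (z : FreeAlgebra KK ι) :
    freeRep C J lam a z - freeRep C J lam b z ∈ singularIdeal C J lam := by
  have of_eq (hab : freeRep C J lam a = freeRep C J lam b) :
      freeRep C J lam a z - freeRep C J lam b z ∈ singularIdeal C J lam := by
    rw [hab, sub_self]
    exact zero_mem _
  cases h with
  | serre_f i j hij =>
    rw [freeRep_pserreF, map_zero, LinearMap.zero_apply, sub_zero]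
    exact serreElt_fOp_apply_mem_singularIdeal C J lam hij z
  | t_tinv i =>
    refine of_eq ?_
    rw [map_mul, map_one, freeRep_pgT, freeRep_pgTinv, tOp_mul_tOp_neg]
  | tinv_t i =>
    refine of_eq ?_
    rw [map_mul, map_one, freeRep_pgT, freeRep_pgTinv, (commute_tOp C lam i i _ _).eq,
      tOp_mul_tOp_neg]
  | t_t i j =>
    refine of_eq ?_
    rw [map_mul, map_mul, freeRep_pgT, freeRep_pgT, (commute_tOp C lam i j _ _).eq]
  | t_tinv_comm i j =>
    refine of_eq ?_
    rw [map_mul, map_mul, freeRep_pgT, freeRep_pgTinv, (commute_tOp C lam i j _ _).eq]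
  | t_e i j =>
    refine of_eq ?_
    simpa [freeRep_pgT, freeRep_pge] using (qCommute_tOp_eOp C lam i 1 j).eq
  | t_f i j =>
    refine of_eq ?_
    simpa [freeRep_pgT, freeRep_pgf] using (qCommute_tOp_fOp C lam i 1 j).eq
  | e_f i j =>
    refine of_eq ?_
    rw [map_sub, map_mul, map_mul, freeRep_pge, freeRep_pgf, ← Ring.lie_def, lie_eOp_fOp]
    split_ifs <;> simp [freeRep_pgT, freeRep_pgTinv]
  | serre_e i j hij =>
    refine of_eq ?_
    rw [freeRep_pserreE, serreElt_eOp_eq_zero C lam hij, map_zero]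

/-- The module `U_q^-(𝔤) / Σ_j U_q^-(𝔤) f_j^{⟨h_j, Λ⟩ + 1}`, presented as a quotient of the free
algebra on the `f`'s. -/
abbrev SingularQuotient : Type :=
  FreeAlgebra KK ι ⧸ (singularIdeal C J lam).restrictScalars KK

variable {J lam}

theorem genOp_mem_singularIdeal (hdom : ∀ j ∈ J, 0 ≤ lam j) :
    ∀ (g : QGenP ι J) {x : FreeAlgebra KK ι}, x ∈ singularIdeal C J lam →
      genOp C J lam g x ∈ singularIdeal C J lam
  | .e j, _, hx => eOp_mem_singularIdeal hdom j hx
  | .f i, _, hx => fOp_mem_singularIdeal i hx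
  | .t i, _, hx => tOp_mem_singularIdeal i 1 hx
  | .tinv i, _, hx => tOp_mem_singularIdeal i (-1) hx

variable (hdom : ∀ j ∈ J, 0 ≤ lam j)

/-- The action of the free algebra on the generators of `U_q(𝔭_J)` induced by `freeRep` on the
quotient by the singular ideal. -/
def freeQuotientRep : FAP ι J →ₐ[KK] Module.End KK (SingularQuotient C J lam) :=
  FreeAlgebra.lift KK fun g =>
    Submodule.mapQ _ _ (genOp C J lam g) fun _ => genOp_mem_singularIdeal C hdom g

theorem freeQuotientRep_apply_mk (a : FAP ι J) :
    ∀ z : FreeAlgebra KK ι,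
      freeQuotientRep C hdom a (Submodule.Quotient.mk z) =
        Submodule.Quotient.mk (freeRep C J lam a z) := by
  induction a using FreeAlgebra.induction with
  | grade0 r => simp [Algebra.algebraMap_eq_smul_one]
  | grade1 g =>
    intro z
    rw [freeQuotientRep, freeRep, FreeAlgebra.lift_ι_apply, FreeAlgebra.lift_ι_apply]
    rfl
  | mul a b iha ihb => simp [iha, ihb]
  | add a b iha ihb => simp [iha, ihb]

theorem freeQuotientRep_eq_of_qRelP {a b : FAP ι J} (h : QRelP C J a b) :
    freeQuotientRep C hdom a = freeQuotientRep C hdom b := by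
  refine Submodule.linearMap_qext _ (LinearMap.ext fun z => ?_)
  simpa [freeQuotientRep_apply_mk, Submodule.Quotient.eq] using
    freeRep_sub_apply_mem_singularIdeal C J lam h z

/-- The action of `U_q(𝔭_J)` on the quotient of the free algebra by the singular ideal. -/
def quotientRep : UqP C J →ₐ[KK] Module.End KK (SingularQuotient C J lam) :=
  RingQuot.liftAlgHom KK ⟨freeQuotientRep C hdom, fun _ _ => freeQuotientRep_eq_of_qRelP C hdom⟩

theorem quotientRep_pMk_apply_mk (a : FAP ι J) (z : FreeAlgebra KK ι) :
    quotientRep C hdom (pMk C J a) (Submodule.Quotient.mk z) =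
      Submodule.Quotient.mk (freeRep C J lam a z) := by
  rw [quotientRep, pMk, RingQuot.liftAlgHom_mkAlgHom_apply]
  exact freeQuotientRep_apply_mk C hdom a z

theorem quotientRep_apply_mk_one_of_mem_VJideal {x : UqP C J} (hx : x ∈ VJideal C J lam) :
    quotientRep C hdom x (Submodule.Quotient.mk 1) = 0 := by
  induction hx using Submodule.span_induction with
  | zero => simp
  | add x y _ _ hx hy => simp [hx, hy]
  | smul a x _ hx => simp [hx]
  | mem x hx =>
    rcases hx with ((⟨j, rfl⟩ | ⟨j, rfl⟩) | ⟨i, rfl⟩) | ⟨i, rfl⟩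
    · rw [pE, quotientRep_pMk_apply_mk, freeRep_pge, eOp_apply_one, Submodule.Quotient.mk_zero]
    · rw [pF, ← map_pow, quotientRep_pMk_apply_mk, map_pow, freeRep_pgf,
        Submodule.Quotient.mk_eq_zero]
      exact fOp_pow_apply_one_mem_singularIdeal j.2
    · rw [map_sub, LinearMap.sub_apply, pT, quotientRep_pMk_apply_mk, freeRep_pgT, tOp_apply_one]
      simp
    · rw [map_sub, LinearMap.sub_apply, pTinv, quotientRep_pMk_apply_mk, freeRep_pgTinv,
        tOp_apply_one]
      simp

end Representation

/-! ### The negative half -/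

section NegativeHalf

variable {ι : Type} [DecidableEq ι] (C : CartanData ι) (J : Set ι)

/-- The canonical map from the free algebra on the `f`'s onto the negative half of `U_q(𝔭_J)`. -/
def negHom : FreeAlgebra KK ι →ₐ[KK] UqP C J :=
  (pMk C J).comp (FreeAlgebra.lift KK (pgf J))

theorem negHom_ι (i : ι) : negHom C J (FreeAlgebra.ι KK i) = pF C J i := by
  simp [negHom, pF]

theorem range_negHom : (negHom C J).range = Pneg C J := by
  rw [Pneg, Algebra.adjoin_range_eq_range_freeAlgebra_lift]
  congr 1
  exact FreeAlgebra.hom_ext <| funext fun i => by simp [negHom_ι]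

theorem freeRep_lift_pgf_apply_one (lam : ι → ℤ) (z : FreeAlgebra KK ι) :
    freeRep C J lam (FreeAlgebra.lift KK (pgf J) z) 1 = z := by
  have h : (freeRep C J lam).comp (FreeAlgebra.lift KK (pgf J)) =
      Algebra.lmul KK (FreeAlgebra KK ι) :=
    FreeAlgebra.hom_ext <| funext fun i => by simp [freeRep_pgf, fOp]
  simpa using LinearMap.congr_fun (AlgHom.congr_fun h z) 1

theorem quotientRep_negHom_apply_mk_one {lam : ι → ℤ} (hdom : ∀ j ∈ J, 0 ≤ lam j)
    (z : FreeAlgebra KK ι) :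
    quotientRep C hdom (negHom C J z) (Submodule.Quotient.mk 1) = Submodule.Quotient.mk z := by
  rw [negHom, AlgHom.comp_apply, quotientRep_pMk_apply_mk, freeRep_lift_pgf_apply_one]

theorem serreElt_pF_eq_zero {i j : ι} (hij : i ≠ j) :
    serreElt (C.d i) (1 - C.a i j).toNat (pF C J i) (pF C J j) = 0 := by
  rw [pF, pF, ← map_serreElt, ← map_zero (pMk C J)]
  exact RingQuot.mkAlgHom_rel KK (.serre_f i j hij)

/-- The left ideal `Σ_j U_q^-(𝔤) f_j^{⟨h_j, Λ⟩ + 1}` of the negative half. -/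
def negIdeal (lam : ι → ℤ) : Submodule KK (UqP C J) :=
  Submodule.span KK {y | ∃ j ∈ J, ∃ u ∈ Pneg C J, y = u * pF C J j ^ (lam j + 1).toNat}

variable {C J} {lam : ι → ℤ}

theorem mul_mem_negIdeal {u x : UqP C J} (hu : u ∈ Pneg C J) (hx : x ∈ negIdeal C J lam) :
    u * x ∈ negIdeal C J lam := by
  induction hx using Submodule.span_induction with
  | mem y hy =>
    obtain ⟨j, hj, v, hv, rfl⟩ := hy
    rw [← mul_assoc]
    exact Submodule.subset_span ⟨j, hj, u * v, mul_mem hu hv, rfl⟩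
  | zero => simp
  | add x y _ _ hx hy => rw [mul_add]; exact add_mem hx hy
  | smul r x _ hx => rw [mul_smul_comm]; exact Submodule.smul_mem _ r hx

theorem negHom_mem_negIdeal {z : FreeAlgebra KK ι} (hz : z ∈ singularIdeal C J lam) :
    negHom C J z ∈ negIdeal C J lam := by
  induction hz using Submodule.span_induction with
  | mem x hx =>
    rcases hx with ⟨i, j, hij, w, rfl⟩ | ⟨j, hj, rfl⟩
    · rw [map_mul, map_serreElt, negHom_ι, negHom_ι, serreElt_pF_eq_zero C J hij, zero_mul]
      exact zero_mem _
    · rw [map_pow, negHom_ι]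
      exact Submodule.subset_span ⟨j, hj, 1, one_mem _, (one_mul _).symm⟩
  | zero => simp
  | add x y _ _ hx hy => rw [map_add]; exact add_mem hx hy
  | smul a x _ hx =>
    rw [smul_eq_mul, map_mul]
    exact mul_mem_negIdeal (range_negHom C J ▸ AlgHom.mem_range_self _ a) hx

theorem mem_negIdeal_of_mem_VJideal (hdom : ∀ j ∈ J, 0 ≤ lam j) {x : UqP C J}
    (hx : x ∈ Pneg C J) (hxV : x ∈ VJideal C J lam) : x ∈ negIdeal C J lam := by
  rw [← range_negHom] at hx
  obtain ⟨z, rfl : negHom C J z = x⟩ := hx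
  refine negHom_mem_negIdeal ?_
  have hz := quotientRep_apply_mk_one_of_mem_VJideal C hdom hxV
  rwa [quotientRep_negHom_apply_mk_one, Submodule.Quotient.mk_eq_zero] at hz

theorem negIdeal_le_VJideal : negIdeal C J lam ≤ (VJideal C J lam).restrictScalars KK := by
  refine Submodule.span_le.mpr ?_
  rintro _ ⟨j, hj, u, -, rfl⟩
  exact Submodule.smul_mem _ u (Submodule.subset_span (.inl (.inl (.inr ⟨⟨j, hj⟩, rfl⟩))))

end NegativeHalf

/-! ### Highest weight vectors -/

section HighestWeightVector

variable {ι : Type} [DecidableEq ι] (C : CartanData ι) (J : Set ι)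

theorem adjoin_range_pMk_ι :
    Algebra.adjoin KK (Set.range fun g => pMk C J (FreeAlgebra.ι KK g)) = ⊤ := by
  rw [Set.range_comp' (pMk C J), ← AlgHom.map_adjoin, FreeAlgebra.adjoin_range_ι, Algebra.map_top,
    AlgHom.range_eq_top]
  exact RingQuot.mkAlgHom_surjective KK (QRelP C J)

theorem pT_mul_pTinv (i : ι) : pT C J i * pTinv C J i = 1 := by
  rw [pT, pTinv, ← map_mul, ← map_one (pMk C J)]
  exact RingQuot.mkAlgHom_rel KK (.t_tinv i)

theorem pTinv_mul_pT (i : ι) : pTinv C J i * pT C J i = 1 := by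
  rw [pT, pTinv, ← map_mul, ← map_one (pMk C J)]
  exact RingQuot.mkAlgHom_rel KK (.tinv_t i)

theorem qCommute_pT_pF (i j : ι) : QCommute (-(C.d i * C.a i j)) (pT C J i) (pF C J j) := by
  rw [QCommute, pT, pF, ← map_mul, ← map_mul, ← map_smul]
  exact RingQuot.mkAlgHom_rel KK (.t_f i j)

theorem qCommute_pTinv_pF (i j : ι) : QCommute (C.d i * C.a i j) (pTinv C J i) (pF C J j) := by
  simpa using (qCommute_pT_pF C J i j).inv_left (pT_mul_pTinv C J i) (pTinv_mul_pT C J i)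

theorem lie_pE_pF (k : J) (j : ι) :
    ⁅pE C J k, pF C J j⁆ = if (k : ι) = j then
      (qpow (C.d k) - qpow (-C.d k))⁻¹ • (pT C J k - pTinv C J k) else 0 := by
  have h : pMk C J _ = pMk C J _ := RingQuot.mkAlgHom_rel KK (.e_f k j)
  rwa [apply_ite (pMk C J), map_sub, map_mul, map_mul, map_smul, map_sub, map_zero] at h

variable {V : Type*} [AddCommGroup V] [Module (UqP C J) V] {v x : V}

theorem pF_smul_mem_span_Pneg (j : ι) (hx : x ∈ Submodule.span (Pneg C J) {v}) :
    pF C J j • x ∈ Submodule.span (Pneg C J) {v} :=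
  Submodule.smul_mem _ (⟨pF C J j, Algebra.subset_adjoin ⟨j, rfl⟩⟩ : Pneg C J) hx

variable [Module KK V] [IsScalarTower KK (UqP C J) V]

theorem smul_mem_span_Pneg {b : UqP C J} (hbv : b • v ∈ Submodule.span (Pneg C J) {v})
    (hb : ∀ j, ∀ x ∈ Submodule.span (Pneg C J) {v}, b • x ∈ Submodule.span (Pneg C J) {v} →
      b • pF C J j • x ∈ Submodule.span (Pneg C J) {v})
    (hx : x ∈ Submodule.span (Pneg C J) {v}) : b • x ∈ Submodule.span (Pneg C J) {v} := by
  refine map_mem_span_of_adjoin_eq_top (R := KK) (D := Algebra.lsmul KK KK V b)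
    (Algebra.adjoin_adjoin_coe_preimage (s := Set.range (pF C J))) ?_ ?_ hx
  · rintro _ rfl
    exact hbv
  · rintro ⟨_, _⟩ ⟨j, rfl⟩ x hbx hx
    exact hb j x hx hbx

theorem qCommute_smul_mem_span_Pneg {b : UqP C J} {c : ι → ℤ} {r : KK} (hbv : b • v = r • v)
    (hb : ∀ j, QCommute (c j) b (pF C J j)) (hx : x ∈ Submodule.span (Pneg C J) {v}) :
    b • x ∈ Submodule.span (Pneg C J) {v} := by
  refine smul_mem_span_Pneg C J ?_ (fun j x _ hbx => ?_) hx
  · rw [hbv]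
    exact Submodule.smul_of_tower_mem _ r (Submodule.mem_span_singleton_self v)
  · rw [← mul_smul, (hb j).eq, smul_assoc, mul_smul]
    exact Submodule.smul_of_tower_mem _ _ (pF_smul_mem_span_Pneg C J j hbx)

theorem exists_mem_Pneg_smul_eq {r r' : ι → KK} (hE : ∀ j, pE C J j • v = 0)
    (hT : ∀ i, pT C J i • v = r i • v) (hTinv : ∀ i, pTinv C J i • v = r' i • v) (a : UqP C J) :
    ∃ u ∈ Pneg C J, u • v = a • v := by
  let N : Submodule KK V := (Submodule.span (Pneg C J) {v}).restrictScalars KK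
  have hT_mem (i : ι) {x : V} (hx : x ∈ N) : pT C J i • x ∈ N :=
    qCommute_smul_mem_span_Pneg C J (hT i) (qCommute_pT_pF C J i) hx
  have hTinv_mem (i : ι) {x : V} (hx : x ∈ N) : pTinv C J i • x ∈ N :=
    qCommute_smul_mem_span_Pneg C J (hTinv i) (qCommute_pTinv_pF C J i) hx
  have hE_mem (k : J) {x : V} (hx : x ∈ N) : pE C J k • x ∈ N := by
    refine smul_mem_span_Pneg C J (by simp [hE]) (fun j x hx hEx => ?_) hx
    have hlie : pE C J k • pF C J j • x = pF C J j • pE C J k • x + ⁅pE C J k, pF C J j⁆ • x := by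
      rw [Ring.lie_def, sub_smul, mul_smul, mul_smul, add_sub_cancel]
    rw [hlie, lie_pE_pF]
    refine add_mem (pF_smul_mem_span_Pneg C J j hEx) ?_
    split_ifs
    · rw [smul_assoc, sub_smul]
      exact N.smul_mem _ (N.sub_mem (hT_mem k hx) (hTinv_mem k hx))
    · rw [zero_smul]
      exact zero_mem _
  have hmem : a • v ∈ N := by
    refine smul_mem_of_mem_adjoin ?_ ((adjoin_range_pMk_ι C J).symm ▸ Algebra.mem_top)
      (Submodule.mem_span_singleton_self v)
    rintro _ ⟨_ | _ | _ | _, rfl⟩ x hx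
    · exact hE_mem _ hx
    · exact pF_smul_mem_span_Pneg C J _ hx
    · exact hT_mem _ hx
    · exact hTinv_mem _ hx
  obtain ⟨u, hu⟩ := Submodule.mem_span_singleton.mp hmem
  exact ⟨u, u.2, hu⟩

end HighestWeightVector

theorem exists_mem_Pneg_mk_eq {ι : Type} [DecidableEq ι] {C : CartanData ι} {J : Set ι}
    {lam : ι → ℤ} (y : VJmod C J lam) :
    ∃ u ∈ Pneg C J, (Submodule.Quotient.mk u : VJmod C J lam) = y := by
  set v : VJmod C J lam := Submodule.Quotient.mk 1
  have smul_v (a : UqP C J) : a • v = Submodule.Quotient.mk a := by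
    rw [← Submodule.Quotient.mk_smul, smul_eq_mul, mul_one]
  have hE (j : J) : pE C J j • v = 0 := by
    rw [smul_v, Submodule.Quotient.mk_eq_zero]
    exact Submodule.subset_span (.inl (.inl (.inl ⟨j, rfl⟩)))
  have hT (i : ι) : pT C J i • v = qpow (C.d i * lam i) • v := by
    rw [smul_v, ← Submodule.Quotient.mk_smul, Submodule.Quotient.eq]
    exact Submodule.subset_span (.inl (.inr ⟨i, rfl⟩))
  have hTinv (i : ι) : pTinv C J i • v = qpow (-(C.d i * lam i)) • v := by
    rw [smul_v, ← Submodule.Quotient.mk_smul, Submodule.Quotient.eq]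
    exact Submodule.subset_span (.inr ⟨i, rfl⟩)
  obtain ⟨a, rfl⟩ := Submodule.Quotient.mk_surjective _ y
  obtain ⟨u, hu, hua⟩ := exists_mem_Pneg_smul_eq C J hE hT hTinv a
  exact ⟨u, hu, by rwa [smul_v, smul_v] at hua⟩

/-- Let `Λ ∈ P` be `J`-dominant (`⟨h_j, Λ⟩ ≥ 0` for all `j ∈ J`).  The canonical map
`U_q^-(𝔤)/Σ_{j∈J} U_q^-(𝔤) f_j^{⟨h_j,Λ⟩+1} → V_J(Λ)` is an isomorphism: the canonical
map from `U_q^-` to `V_J(Λ)` is surjective, and its kernel is exactly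
`Σ_{j∈J} U_q^- f_j^{⟨h_j,Λ⟩+1}`. -/
theorem VJ_iso_quotient_of_negative_half
    (I : Type) [DecidableEq I] (C : CartanData I) (J : Set I) (lam : I → ℤ)
    (hdom : ∀ j ∈ J, 0 ≤ lam j) :
    (Function.Surjective fun x : ↥(Pneg C J) =>
      (Submodule.Quotient.mk (x : UqP C J) : VJmod C J lam)) ∧
    ∀ x : UqP C J, x ∈ Pneg C J →
      ((Submodule.Quotient.mk x : VJmod C J lam) = 0 ↔
        x ∈ Submodule.span KK
          {y : UqP C J | ∃ j ∈ J, ∃ u ∈ Pneg C J, y = u * pF C J j ^ (lam j + 1).toNat}) := by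
  refine ⟨fun y => ?_, fun x hx => ?_⟩
  · obtain ⟨u, hu, huy⟩ := exists_mem_Pneg_mk_eq y
    exact ⟨⟨u, hu⟩, huy⟩
  · rw [Submodule.Quotient.mk_eq_zero]
    exact ⟨mem_negIdeal_of_mem_VJideal hdom hx, fun h => negIdeal_le_VJideal h⟩

end
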